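/- Let m > p ≥ 2, X a real m×p matrix, ν_i > 0, and w ∈ S_m with 0 ≤ w_l < 1 for every l and f(w) > 0; fix an index i and define a, b, A, B as in the context. Suppose b > 0 and B > 0, and suppose that neither the conjunction (A ≠ B, A > 0, B > 0, a > b, aB > bA, and bA < (a−b)B) nor the conjunction (A = B and a > 2b) holds. Then max_{x ∈ [0,1]} h_i(x) = b/B > 0, and this maximum is attained at the unique point x* = 0. -/

import Mathlib

/-!
Write `M(x)` for the information matrix at `w(x)`, `N = M(0)`, and `u` for the `i`-th row of `X`.
Then `M(x) = (1 - x) N + x ν_i u uᵀ`, so the matrix determinant lemma gives, for `x < 1`,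
`det M(x) = (1 - x)^(p-1) ((1 - x) b + x a)` with `a = ν_i b (uᵀ N⁻¹ u) ≥ 0`. The same formula for
every `X` with a column deleted, summed over the columns, gives
`tr (adj M(x)) = (1 - x)^(p-2) ((1 - x) B + x A)` with `A ≥ 0`; and if `A = 0`, then every
column-deleted `u` vanishes, so `u = 0` (because `p ≥ 2`) and `a = 0`.

Hence `h_i(x) = (1 - x) ((1 - x) b + x a) / ((1 - x) B + x A)` for `x < 1`, while `h_i(1) = 0`
since `M(1)` has rank at most one. For `0 < x < 1` the inequality `h_i(x) < b / B` amounts to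
`b A + (b - a) B (1 - x) > 0`, which is what the two negated conjunctions ensure
(`scalar_ineq`). The carrying lemmas are `fFun_liftW`, `trace_inv_infoM` and `scalar_ineq`.
-/

open Matrix

def dropIdx {p : ℕ} (j : Fin p) (k : Fin (p - 1)) : Fin p :=
  if h : (k : ℕ) < (j : ℕ) then ⟨k, lt_trans h j.isLt⟩
  else ⟨(k : ℕ) + 1, by have hk := k.isLt; omega⟩

noncomputable def infoM {m p : ℕ} (X : Matrix (Fin m) (Fin p) ℝ) (ν w : Fin m → ℝ) :
    Matrix (Fin p) (Fin p) ℝ :=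
  Xᵀ * Matrix.diagonal (fun i => w i * ν i) * X

noncomputable def fFun {m p : ℕ} (X : Matrix (Fin m) (Fin p) ℝ) (ν w : Fin m → ℝ) : ℝ :=
  (infoM X ν w).det

noncomputable def hFun {m p : ℕ} (X : Matrix (Fin m) (Fin p) ℝ) (ν w : Fin m → ℝ) : ℝ :=
  if 0 < fFun X ν w then ((infoM X ν w)⁻¹).trace⁻¹ else 0

noncomputable def fminus {m p : ℕ} (X : Matrix (Fin m) (Fin p) ℝ) (ν : Fin m → ℝ)
    (j : Fin p) (w : Fin m → ℝ) : ℝ :=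
  ((X.submatrix id (dropIdx j))ᵀ * Matrix.diagonal (fun i => w i * ν i)
    * X.submatrix id (dropIdx j)).det

noncomputable def liftW {m : ℕ} (w : Fin m → ℝ) (i : Fin m) (x : ℝ) : Fin m → ℝ :=
  fun l => if l = i then x else w l * (1 - x) / (1 - w i)

lemma infoM_apply {m p : ℕ} (X : Matrix (Fin m) (Fin p) ℝ) (ν w : Fin m → ℝ) (j k : Fin p) :
    infoM X ν w j k = ∑ l, X l j * (w l * ν l) * X l k := by
  simp [infoM, Matrix.mul_apply, Matrix.diagonal_apply]

lemma infoM_liftW {m p : ℕ} (X : Matrix (Fin m) (Fin p) ℝ) (ν w : Fin m → ℝ) (i : Fin m)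
    (x : ℝ) :
    infoM X ν (liftW w i x) =
      (1 - x) • infoM X ν (liftW w i 0) + (x * ν i) • vecMulVec (X i) (X i) := by
  ext j k
  simp only [Matrix.add_apply, Matrix.smul_apply, infoM_apply, vecMulVec_apply, smul_eq_mul]
  rw [← Finset.add_sum_erase _ _ (Finset.mem_univ i),
    ← Finset.add_sum_erase Finset.univ (fun l => X l j * (liftW w i 0 l * ν l) * X l k)
      (Finset.mem_univ i), mul_add, Finset.mul_sum]
  have hsum : ∑ l ∈ Finset.univ.erase i, X l j * (liftW w i x l * ν l) * X l k
      = ∑ l ∈ Finset.univ.erase i, (1 - x) * (X l j * (liftW w i 0 l * ν l) * X l k) := by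
    refine Finset.sum_congr rfl fun l hl => ?_
    simp only [liftW, if_neg (Finset.ne_of_mem_erase hl)]
    ring
  rw [hsum]
  simp only [liftW, if_true]
  ring

lemma infoM_posSemidef {m p : ℕ} (X : Matrix (Fin m) (Fin p) ℝ) (ν w : Fin m → ℝ)
    (hν : ∀ l, 0 < ν l) (hw : ∀ l, 0 ≤ w l) : (infoM X ν w).PosSemidef := by
  have hd : (Matrix.diagonal (fun l => w l * ν l)).PosSemidef :=
    Matrix.PosSemidef.diagonal fun l => mul_nonneg (hw l) (hν l).le
  simpa [infoM, Matrix.conjTranspose_eq_transpose_of_trivial] using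
    hd.conjTranspose_mul_mul_same X

/-- The coefficient of `x` in the reduced determinant: `ν_i det N (uᵀ N⁻¹ u)`, where `N` is the
information matrix at `x = 0` and `u` is the `i`-th row of the design matrix. -/
noncomputable def detSlope {m p : ℕ} (X : Matrix (Fin m) (Fin p) ℝ) (ν w : Fin m → ℝ)
    (i : Fin m) : ℝ :=
  ν i * (infoM X ν (liftW w i 0)).det * (X i ⬝ᵥ ((infoM X ν (liftW w i 0))⁻¹ *ᵥ X i))

/-- The matrix determinant lemma along the segment `x ↦ w(x)`. -/
lemma fFun_liftW {m n : ℕ} (X : Matrix (Fin m) (Fin (n + 1)) ℝ) (ν w : Fin m → ℝ) (i : Fin m)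
    (hN : (infoM X ν (liftW w i 0)).PosDef) {x : ℝ} (hx : x < 1) :
    fFun X ν (liftW w i x) =
      (1 - x) ^ n * ((1 - x) * fFun X ν (liftW w i 0) + x * detSlope X ν w i) := by
  have h1 : 1 - x ≠ 0 := by linarith
  unfold fFun detSlope
  rw [infoM_liftW X ν w i x]
  generalize infoM X ν (liftW w i 0) = N at hN ⊢
  have hfac : (1 - x) • N + (x * ν i) • vecMulVec (X i) (X i) =
      (1 - x) • (N + replicateCol Unit ((x * ν i / (1 - x)) • X i) * replicateRow Unit (X i)) := by
    rw [← vecMulVec_eq, smul_add, smul_vecMulVec, smul_smul, mul_div_cancel₀ _ h1]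
  rw [hfac, Matrix.det_smul,
    Matrix.det_add_replicateCol_mul_replicateRow ((Matrix.isUnit_iff_isUnit_det _).1 hN.isUnit)]
  have hdet : (1 + replicateRow Unit (X i) * N⁻¹ *
      replicateCol Unit ((x * ν i / (1 - x)) • X i)).det =
      1 + x * ν i / (1 - x) * (X i ⬝ᵥ (N⁻¹ *ᵥ X i)) := by
    rw [Matrix.mul_assoc, Matrix.det_unique, Matrix.add_apply, Matrix.one_apply_eq,
      ← Matrix.replicateCol_mulVec, Matrix.replicateRow_mul_replicateCol_apply,
      Matrix.mulVec_smul, dotProduct_smul, smul_eq_mul]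
  rw [hdet, Fintype.card_fin, pow_succ]
  field_simp

lemma slope_nonneg {m p : ℕ} (X : Matrix (Fin m) (Fin p) ℝ) (ν w : Fin m → ℝ) (i : Fin m)
    (hν : 0 < ν i) (hN : (infoM X ν (liftW w i 0)).PosDef) : 0 ≤ detSlope X ν w i := by
  have h := hN.inv.posSemidef.dotProduct_mulVec_nonneg (X i)
  rw [star_trivial] at h
  exact mul_nonneg (mul_nonneg hν.le hN.det_pos.le) h

lemma row_eq_zero_of_detSlope {m p : ℕ} (X : Matrix (Fin m) (Fin p) ℝ) (ν w : Fin m → ℝ)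
    (i : Fin m) (hν : 0 < ν i) (hN : (infoM X ν (liftW w i 0)).PosDef)
    (h0 : detSlope X ν w i = 0) : X i = 0 := by
  by_contra hX
  have h := hN.inv.dotProduct_mulVec_pos hX
  rw [star_trivial] at h
  exact (mul_pos (mul_pos hν hN.det_pos) h).ne' h0

lemma dropIdx_eq_succAbove {n : ℕ} (j : Fin (n + 1)) :
    (dropIdx j : Fin n → Fin (n + 1)) = j.succAbove := by
  funext k
  ext
  by_cases h : (k : ℕ) < j
  · rw [Fin.succAbove_of_castSucc_lt _ _ h]
    simp [dropIdx, h]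
  · rw [Fin.succAbove_of_le_castSucc _ _ (not_lt.1 h)]
    simp [dropIdx, h]

/-- Deleting columns of the design matrix takes a principal submatrix of the information matrix. -/
lemma infoM_submatrix {m p q : ℕ} (X : Matrix (Fin m) (Fin p) ℝ) (ν w : Fin m → ℝ)
    (e : Fin q → Fin p) :
    infoM (X.submatrix id e) ν w = (infoM X ν w).submatrix e e := by
  ext j k
  simp [infoM_apply]

lemma fminus_eq {m n : ℕ} (X : Matrix (Fin m) (Fin (n + 1)) ℝ) (ν w : Fin m → ℝ)
    (j : Fin (n + 1)) : fminus X ν j w = fFun (X.submatrix id j.succAbove) ν w := by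
  rw [← dropIdx_eq_succAbove]
  rfl

lemma trace_inv_infoM {m n : ℕ} (X : Matrix (Fin m) (Fin (n + 1)) ℝ) (ν w : Fin m → ℝ) :
    ((infoM X ν w)⁻¹).trace = (fFun X ν w)⁻¹ * ∑ j, fminus X ν j w := by
  rw [Matrix.inv_def, Matrix.trace_smul, smul_eq_mul, Ring.inverse_eq_inv']
  congr 1
  refine Finset.sum_congr rfl fun j _ => ?_
  rw [Matrix.diag_apply, Matrix.adjugate_fin_succ_eq_det_submatrix, fminus_eq, fFun,
    infoM_submatrix]
  simp [← two_mul]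

/-- For `0 < x < 1`, this is the inequality `h_i(x) < b / B` with denominators cleared. -/
lemma scalar_ineq {a b A B x : ℝ} (hb : 0 < b) (hB : 0 < B) (hA : 0 ≤ A)
    (hA0 : A = 0 → a = 0)
    (hnot1 : ¬(A ≠ B ∧ 0 < A ∧ 0 < B ∧ b < a ∧ b * A < a * B ∧ b * A < (a - b) * B))
    (hnot2 : ¬(A = B ∧ 2 * b < a)) (hx0 : 0 < x) (hx1 : x < 1) :
    (1 - x) * ((1 - x) * b + x * a) * B < b * ((1 - x) * B + x * A) := by
  have hkey : 0 < b * A + (b - a) * B * (1 - x) := by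
    rcases hA.eq_or_lt with hA' | hA'
    · rw [hA0 hA'.symm, ← hA']
      have := mul_pos (mul_pos hb hB) (sub_pos.2 hx1)
      linarith
    · have hbA := mul_pos hb hA'
      rcases le_or_gt a b with hab | hab
      · have := mul_nonneg (mul_nonneg (sub_nonneg.2 hab) hB.le) (sub_pos.2 hx1).le
        linarith
      · have hle : (a - b) * B ≤ b * A := by
          by_cases hAB : A = B
          · have h2 : a ≤ 2 * b := not_lt.1 fun h => hnot2 ⟨hAB, h⟩
            rw [hAB]
            exact mul_le_mul_of_nonneg_right (by linarith) hB.le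
          · by_contra hlt
            have hlt' := not_le.1 hlt
            have := mul_pos hb hB
            exact hnot1 ⟨hAB, hA', hB, hab, by linarith, hlt'⟩
        have := mul_pos (mul_pos (sub_pos.2 hab) hB) hx0
        linarith
  have := mul_pos hx0 hkey
  linarith

theorem stmt12 {m p : ℕ} (hp : 2 ≤ p) (hmp : p < m)
    (X : Matrix (Fin m) (Fin p) ℝ) (ν : Fin m → ℝ) (hν : ∀ l, 0 < ν l)
    (w : Fin m → ℝ) (hw0 : ∀ l, 0 ≤ w l) (hw1 : ∑ l, w l = 1)
    (hwlt : ∀ l, w l < 1) (hf : 0 < fFun X ν w) (i : Fin m)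
    (a b A B : ℝ)
    (hb : b = fFun X ν (liftW w i 0))
    (ha : a = 2 ^ p * fFun X ν (liftW w i (1 / 2)) - b)
    (hB : B = ∑ j, fminus X ν j (liftW w i 0))
    (hA : A = ∑ j, (2 ^ (p - 1) * fminus X ν j (liftW w i (1 / 2))
        - fminus X ν j (liftW w i 0)))
    (hbpos : 0 < b) (hBpos : 0 < B)
    (hnot1 : ¬(A ≠ B ∧ 0 < A ∧ 0 < B ∧ b < a ∧ b * A < a * B ∧ b * A < (a - b) * B))
    (hnot2 : ¬(A = B ∧ 2 * b < a)) :
    0 < b / B ∧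
    hFun X ν (liftW w i 0) = b / B ∧
    (∀ x ∈ Set.Icc (0 : ℝ) 1, hFun X ν (liftW w i x) ≤ b / B) ∧
    (∀ x ∈ Set.Icc (0 : ℝ) 1, hFun X ν (liftW w i x) = b / B → x = 0) := by
  obtain ⟨q, rfl⟩ : ∃ q, p = q + 2 := ⟨p - 2, by omega⟩
  have hw' : ∀ l, 0 ≤ liftW w i 0 l := by
    intro l
    unfold liftW
    split_ifs
    · exact le_rfl
    · exact div_nonneg (mul_nonneg (hw0 l) (by norm_num)) (sub_pos.2 (hwlt i)).le
  have hN : (infoM X ν (liftW w i 0)).PosDef :=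
    (infoM_posSemidef X ν _ hν hw').posDef_iff_det_ne_zero.2 (hb ▸ hbpos).ne'
  have hNj : ∀ j : Fin (q + 2),
      (infoM (X.submatrix id j.succAbove) ν (liftW w i 0)).PosDef := fun j => by
    rw [infoM_submatrix]
    exact hN.submatrix Fin.succAbove_right_injective
  -- Evaluating the determinant formulas at `x = 1/2` identifies `a` and `A` with the slopes.
  have ha' : a = detSlope X ν w i := by
    rw [ha, fFun_liftW X ν w i hN (by norm_num), ← hb]
    have h2 : (2 : ℝ) ^ (q + 1) * (1 - 1 / 2) ^ (q + 1) = 1 := by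
      rw [← mul_pow]; norm_num
    rw [pow_succ]
    linear_combination (b + detSlope X ν w i) * h2
  have hA' : A = ∑ j : Fin (q + 2), detSlope (X.submatrix id j.succAbove) ν w i := by
    rw [hA]
    refine Finset.sum_congr rfl fun j _ => ?_
    rw [fminus_eq, fminus_eq, fFun_liftW _ ν w i (hNj j) (by norm_num)]
    have h2 : (2 : ℝ) ^ q * (1 - 1 / 2) ^ q = 1 := by
      rw [← mul_pow]; norm_num
    rw [show q + 2 - 1 = q + 1 from rfl, pow_succ]
    linear_combination (fFun (X.submatrix id j.succAbove) ν (liftW w i 0) +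
      detSlope (X.submatrix id j.succAbove) ν w i) * h2
  have hdetSlope : ∀ j : Fin (q + 2), 0 ≤ detSlope (X.submatrix id j.succAbove) ν w i :=
    fun j => slope_nonneg _ ν w i (hν i) (hNj j)
  have ha0 : 0 ≤ a := ha' ▸ slope_nonneg X ν w i (hν i) hN
  have hA0 : 0 ≤ A := hA' ▸ Finset.sum_nonneg fun j _ => hdetSlope j
  have hAa : A = 0 → a = 0 := by
    intro h
    rw [hA', Finset.sum_eq_zero_iff_of_nonneg fun j _ => hdetSlope j] at h
    have hX : X i = 0 := by
      funext k
      -- As there are at least two columns, `k` survives the deletion of some other column `j`.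
      obtain ⟨j, hj⟩ := exists_ne k
      obtain ⟨l, hl⟩ := Fin.exists_succAbove_eq hj.symm
      have := congrFun (row_eq_zero_of_detSlope _ ν w i (hν i) (hNj j) (h j (Finset.mem_univ _))) l
      rw [← hl]
      exact this
    rw [ha', detSlope, hX]
    simp
  have hform : ∀ x, 0 ≤ x → x < 1 → hFun X ν (liftW w i x) =
      (1 - x) * ((1 - x) * b + x * a) / ((1 - x) * B + x * A) := by
    intro x hx0 hx1
    have h1 : 0 < 1 - x := sub_pos.2 hx1
    have hf' : fFun X ν (liftW w i x) = (1 - x) ^ (q + 1) * ((1 - x) * b + x * a) := by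
      rw [fFun_liftW X ν w i hN hx1, ← hb, ← ha']
    have hg : ∑ j, fminus X ν j (liftW w i x) = (1 - x) ^ q * ((1 - x) * B + x * A) := by
      rw [hB, hA', Finset.mul_sum, Finset.mul_sum, ← Finset.sum_add_distrib, Finset.mul_sum]
      refine Finset.sum_congr rfl fun j _ => ?_
      rw [fminus_eq, fminus_eq, fFun_liftW _ ν w i (hNj j) hx1]
    have hpos : 0 < fFun X ν (liftW w i x) := by
      rw [hf']
      positivity
    rw [hFun, if_pos hpos, trace_inv_infoM, mul_inv, inv_inv, hf', hg, ← div_eq_mul_inv, pow_succ,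
      mul_assoc, mul_div_mul_left _ _ (pow_pos h1 q).ne']
  have hone : hFun X ν (liftW w i 1) = 0 := by
    have hdet : fFun X ν (liftW w i 1) = 0 := by
      rw [fFun, infoM_liftW, sub_self, zero_smul, zero_add, Matrix.det_smul,
        Matrix.det_vecMulVec, mul_zero]
    rw [hFun, if_neg hdet.not_gt]
  have hbB : 0 < b / B := div_pos hbpos hBpos
  have hzero : hFun X ν (liftW w i 0) = b / B := by
    rw [hform 0 le_rfl one_pos]
    simp
  have hlt : ∀ x ∈ Set.Icc (0 : ℝ) 1, x ≠ 0 → hFun X ν (liftW w i x) < b / B := by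
    rintro x ⟨hx0, hx1⟩ hne
    rcases hx1.eq_or_lt with rfl | hx1
    · rwa [hone]
    · have hx0' : 0 < x := lt_of_le_of_ne hx0 hne.symm
      have h1 : 0 < 1 - x := sub_pos.2 hx1
      rw [hform x hx0 hx1, div_lt_div_iff₀ (by positivity) hBpos]
      exact scalar_ineq hbpos hBpos hA0 hAa hnot1 hnot2 hx0' hx1
  refine ⟨hbB, hzero, fun x hx => ?_, fun x hx h => ?_⟩
  · by_cases h0 : x = 0
    · rw [h0, hzero]
    · exact (hlt x hx h0).le
  · by_contra h0
    exact (hlt x hx h0).ne h
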